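/- The minimum-distance spectrum of the 9×9 matrix T₃ ⊗ T₃ is (9,6,4,4,3,2,2,2,1); that is, S_{T₃⊗T₃}(1) = 9, S_{T₃⊗T₃}(2) = 6, S_{T₃⊗T₃}(3) = 4, S_{T₃⊗T₃}(4) = 4, S_{T₃⊗T₃}(5) = 3, S_{T₃⊗T₃}(6) = 2, S_{T₃⊗T₃}(7) = 2, S_{T₃⊗T₃}(8) = 2, and S_{T₃⊗T₃}(9) = 1. -/

import Mathlib

open Matrix

noncomputable section

abbrev F2 : Type := ZMod 2

/-- The Arikan kernel `T₂ = ((1,0),(1,1))` over `F₂`. -/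
def T2 : Matrix (Fin 2) (Fin 2) F2 := !![1, 0; 1, 1]

/-- Kronecker product of `Fin`-indexed square matrices, with the standard index
convention `(A ⊗ B) i j = A (i / n) (j / n) * B (i % n) (j % n)`. -/
def kron {m n : ℕ} (A : Matrix (Fin m) (Fin m) F2) (B : Matrix (Fin n) (Fin n) F2) :
    Matrix (Fin (m * n)) (Fin (m * n)) F2 :=
  fun i j => A i.divNat j.divNat * B i.modNat j.modNat

/-- The `n`-fold Kronecker power of `T₂` (with `T₂^{⊗0}` the 1×1 identity). -/
def T2pow : (n : ℕ) → Matrix (Fin (2 ^ n)) (Fin (2 ^ n)) F2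
  | 0 => 1
  | n + 1 => (kron T2 (T2pow n)).submatrix
      (Fin.cast (by rw [pow_succ, Nat.mul_comm]))
      (Fin.cast (by rw [pow_succ, Nat.mul_comm]))

/-- Minimum distance `d_G(I)`: the minimum Hamming weight of `u · G` over all
nonzero row vectors `u` with support contained in `I`. -/
def minDist {N : ℕ} (G : Matrix (Fin N) (Fin N) F2) (I : Finset (Fin N)) : ℕ :=
  sInf {w | ∃ u : Fin N → F2, u ≠ 0 ∧ (∀ i, u i ≠ 0 → i ∈ I) ∧
    hammingNorm (Matrix.vecMul u G) = w}

/-- Minimum-distance spectrum `S_G(K)`: the maximum of `d_G(I)` over all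
row-index sets `I` of size `K`. -/
def spec {N : ℕ} (G : Matrix (Fin N) (Fin N) F2) (K : ℕ) : ℕ :=
  sSup {d | ∃ I : Finset (Fin N), I.card = K ∧ minDist G I = d}

/-- `K`-th largest element (1-indexed, counted with multiplicity) of a
multiset of natural numbers. -/
def kthLargest (s : Multiset ℕ) (K : ℕ) : ℕ :=
  ((s.sort (· ≤ ·)).reverse).getD (K - 1) 0

/-- The kernel `T₃` from the paper. -/
def T3 : Matrix (Fin 3) (Fin 3) F2 := !![1, 1, 1; 1, 0, 1; 0, 1, 1]

/-!
A code `{u ᵥ* G | supp u ⊆ I}` with positive minimum distance is an injective image of `F₂^I`, so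
classical coding bounds limit the spectrum of every `9 × 9` matrix: the Plotkin bound for
`K = 1, 2`, the Plotkin bound after adding a parity bit for `K = 3`, the Hamming bound for `K = 6`,
and the Hamming bound after deleting a coordinate for `K = 5, 9`. The matrix `T₃ ⊗ T₃` attains all
of them. The rows indexed by `I × J` generate the product code, of distance `d(I) d(J)`, and
`S_{T₃} ≥ (3, 2, 1)`; this settles `K = 1, 2, 4, 9`. For `K = 5` the all-ones row is added to the
product code of dimension `4`: a word involving it has an odd number of ones in each block of
three. For `K = 8`, all rows but the all-ones row have even weight. The spectrum is antitone, which
gives the remaining bounds.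
-/

open Finset

section HammingNorm

theorem natCast_hammingNorm {ι : Type*} [Fintype ι] (x : ι → F2) :
    (hammingNorm x : F2) = ∑ i, x i := by
  have ite_eq_self : ∀ a : F2, (if a = 0 then 0 else 1) = a := by decide
  simp [hammingNorm, card_filter, ite_eq_self]

theorem even_hammingNorm_iff_sum_eq_zero {ι : Type*} [Fintype ι] (x : ι → F2) :
    Even (hammingNorm x) ↔ ∑ i, x i = 0 := by
  rw [← natCast_hammingNorm, ZMod.natCast_eq_zero_iff_even]

theorem hammingNorm_cons {α : Type*} [Zero α] [DecidableEq α] {n : ℕ} (a : α) (x : Fin n → α) :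
    hammingNorm (Fin.cons a x : Fin (n + 1) → α) = (if a ≠ 0 then 1 else 0) + hammingNorm x := by
  simp [hammingNorm, card_filter, Fin.sum_univ_succ]

theorem hammingNorm_le_hammingNorm_tail_add_one {α : Type*} [Zero α] [DecidableEq α] {n : ℕ}
    (x : Fin (n + 1) → α) : hammingNorm x ≤ hammingNorm (Fin.tail x) + 1 := by
  conv_lhs => rw [← Fin.cons_self_tail x, hammingNorm_cons]
  split_ifs <;> omega

theorem card_hammingNorm_eq {ι : Type*} [Fintype ι] [DecidableEq ι] (k : ℕ) :
    #{x : ι → F2 | hammingNorm x = k} = (Fintype.card ι).choose k := by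
  rw [← card_univ, ← card_powersetCard]
  refine card_nbij' (fun x => ({i | x i ≠ 0} : Finset ι)) (fun s i => if i ∈ s then 1 else 0)
    (fun x hx => ?_) (fun s hs => ?_) (fun x _ => ?_) (fun s _ => ?_)
  · simpa [hammingNorm] using hx
  · simpa [hammingNorm] using hs
  · ext i
    by_cases hi : x i = 0
    · simp [hi]
    · have hi_one : x i = 1 := Fin.eq_one_of_ne_zero _ hi
      simp [hi_one]
  · ext i
    simp

theorem card_hammingNorm_le {ι : Type*} [Fintype ι] [DecidableEq ι] (e : ℕ) :
    #{x : ι → F2 | hammingNorm x ≤ e} = ∑ k ∈ range (e + 1), (Fintype.card ι).choose k := by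
  rw [card_eq_sum_card_fiberwise (f := hammingNorm) (t := range (e + 1))
    fun x hx => by simpa [Nat.lt_succ_iff] using hx]
  refine sum_congr rfl fun k hk => ?_
  rw [← card_hammingNorm_eq, filter_filter]
  congr 1 with x
  simp only [mem_filter_univ, and_iff_right_iff_imp]
  rintro rfl
  exact Nat.lt_succ_iff.mp (mem_range.mp hk)

theorem mul_hammingNorm_le_hammingNorm {α β : Type*} [Zero α] [DecidableEq α] [Zero β]
    [DecidableEq β] {m n c : ℕ} (x : Fin m → α) (w : Fin (m * n) → β)
    (h : ∀ a, x a ≠ 0 → c ≤ hammingNorm fun b => w (finProdFinEquiv (a, b))) :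
    c * hammingNorm x ≤ hammingNorm w := by
  calc c * hammingNorm x = ∑ a with x a ≠ 0, c := by simp [hammingNorm, mul_comm]
    _ ≤ ∑ a with x a ≠ 0, hammingNorm fun b => w (finProdFinEquiv (a, b)) :=
      sum_le_sum fun a ha => h a (mem_filter_univ a |>.mp ha)
    _ ≤ ∑ a, hammingNorm fun b => w (finProdFinEquiv (a, b)) :=
      sum_le_sum_of_subset (filter_subset _ _)
    _ = hammingNorm w := by
      simp only [hammingNorm, card_filter]
      rw [← finProdFinEquiv.sum_comp, Fintype.sum_prod_type]

end HammingNorm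

section CodingBounds

variable {V α ι : Type*} [AddGroup V] [AddCommGroup α] [DecidableEq α] [Fintype ι] {n d : ℕ}

/-- The additive code with encoder `f` has minimum distance at least `d`. The condition is on
messages rather than on codewords, so that it forces `f` to be injective when `d` is positive. -/
def MinWeightAtLeast (f : V →+ ι → α) (d : ℕ) : Prop :=
  ∀ v, v ≠ 0 → d ≤ hammingNorm (f v)

/-- The punctured code, in which the first coordinate of every codeword is deleted. -/
def puncture (f : V →+ Fin (n + 1) → α) : V →+ Fin n → α where
  toFun v := Fin.tail (f v)
  map_zero' := by simp only [map_zero]; rfl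
  map_add' v w := by simp only [map_add]; rfl

/-- The extended code, in which every codeword is preceded by a parity bit. -/
def parityExtend (f : V →+ Fin n → F2) : V →+ Fin (n + 1) → F2 where
  toFun v := Fin.cons (∑ i, f v i) (f v)
  map_zero' := by ext i; cases i using Fin.cases <;> simp
  map_add' v w := by ext i; cases i using Fin.cases <;> simp [sum_add_distrib]

theorem even_hammingNorm_parityExtend (f : V →+ Fin n → F2) (v : V) :
    Even (hammingNorm (parityExtend f v)) := by
  rw [even_hammingNorm_iff_sum_eq_zero, Fin.sum_univ_succ]
  exact CharTwo.add_self_eq_zero _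

theorem MinWeightAtLeast.puncture {f : V →+ Fin (n + 1) → α} (hf : MinWeightAtLeast f (d + 1)) :
    MinWeightAtLeast (puncture f) d := fun v hv =>
  Nat.le_of_add_le_add_right ((hf v hv).trans (hammingNorm_le_hammingNorm_tail_add_one (f v)))

theorem MinWeightAtLeast.parityExtend {f : V →+ Fin n → F2} (hf : MinWeightAtLeast f d)
    (hd : Odd d) : MinWeightAtLeast (parityExtend f) (d + 1) := fun v hv => by
  have le_extend : d ≤ hammingNorm (_root_.parityExtend f v) :=
    (hf v hv).trans ((Nat.le_add_left _ _).trans_eq (hammingNorm_cons _ (f v)).symm)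
  refine Nat.lt_of_le_of_ne le_extend fun h => ?_
  exact Nat.not_even_iff_odd.mpr hd (h ▸ even_hammingNorm_parityExtend f v)

theorem MinWeightAtLeast.hamming_bound [Fintype V] [Fintype α] [DecidableEq ι] {e : ℕ}
    {f : V →+ ι → α} (hf : MinWeightAtLeast f d) (hd : 2 * e < d) :
    Fintype.card V * #{x : ι → α | hammingNorm x ≤ e} ≤ Fintype.card α ^ Fintype.card ι := by
  rw [← Fintype.card_fun, ← card_univ, ← card_univ, ← card_product]
  refine card_le_card_of_injOn (fun p => f p.1 + p.2) (fun _ _ => mem_univ _) ?_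
  rintro ⟨v, x⟩ hx ⟨w, y⟩ hy (h : f v + x = f w + y)
  replace hx : hammingNorm x ≤ e := by simpa using hx
  replace hy : hammingNorm y ≤ e := by simpa using hy
  have map_sub_eq : f (v - w) = y - x := by
    rw [map_sub, sub_eq_sub_iff_add_eq_add, h, add_comm]
  have weight_le : hammingNorm (f (v - w)) ≤ 2 * e := by
    calc hammingNorm (f (v - w)) = hammingDist x y := by
          rw [map_sub_eq, hammingDist_eq_hammingNorm, sub_eq_neg_add]
      _ ≤ hammingDist x 0 + hammingDist 0 y := hammingDist_triangle _ _ _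
      _ ≤ 2 * e := by rw [hammingDist_zero_left, hammingDist_zero_right]; omega
  obtain rfl : v = w := by
    by_contra hvw
    exact absurd (hf _ (sub_ne_zero.mpr hvw)) (by omega)
  simpa using h

theorem MinWeightAtLeast.binary_hamming_bound [Fintype V] {e : ℕ} {f : V →+ ι → F2}
    (hf : MinWeightAtLeast f d) (hd : 2 * e < d) :
    Fintype.card V * ∑ k ∈ range (e + 1), (Fintype.card ι).choose k ≤ 2 ^ Fintype.card ι := by
  classical
  simpa only [card_hammingNorm_le, ZMod.card] using hf.hamming_bound hd

theorem two_mul_card_ne_zero_le [Fintype V] (φ : V →+ F2) :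
    2 * #{v | φ v ≠ 0} ≤ Fintype.card V := by
  have add_eq_zero_of_ne_zero : ∀ a b : F2, a ≠ 0 → b ≠ 0 → a + b = 0 := by decide
  obtain h | ⟨w, hw⟩ := ({v | φ v ≠ 0} : Finset V).eq_empty_or_nonempty
  · simp [h]
  have card_le : #{v | φ v ≠ 0} ≤ #{v | ¬ φ v ≠ 0} := by
    refine card_le_card_of_injOn (· + w) (fun v hv => ?_) (add_left_injective w).injOn
    simpa using add_eq_zero_of_ne_zero _ _ (mem_filter_univ v |>.mp hv) (mem_filter_univ w |>.mp hw)
  calc 2 * #{v | φ v ≠ 0} ≤ #{v | φ v ≠ 0} + #{v | ¬ φ v ≠ 0} := by omega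
    _ = Fintype.card V := card_filter_add_card_filter_not _

theorem MinWeightAtLeast.plotkin_bound [Fintype V] {f : V →+ ι → F2} (hf : MinWeightAtLeast f d) :
    2 * ((Fintype.card V - 1) * d) ≤ Fintype.card ι * Fintype.card V := by
  classical
  have sum_weights_ge : (Fintype.card V - 1) * d ≤ ∑ v, hammingNorm (f v) := by
    calc (Fintype.card V - 1) * d = ∑ _v ∈ univ.erase (0 : V), d := by
          simp [card_erase_of_mem]
      _ ≤ ∑ v ∈ univ.erase (0 : V), hammingNorm (f v) :=
        sum_le_sum fun v hv => hf v (ne_of_mem_erase hv)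
      _ ≤ ∑ v, hammingNorm (f v) := sum_le_sum_of_subset (erase_subset _ _)
  have sum_weights_eq : ∑ v, hammingNorm (f v) = ∑ i, #{v | f v i ≠ 0} := by
    simp only [hammingNorm, card_filter]
    exact sum_comm
  calc 2 * ((Fintype.card V - 1) * d) ≤ ∑ i, 2 * #{v | f v i ≠ 0} := by
        rw [← mul_sum, ← sum_weights_eq]
        gcongr
    _ ≤ ∑ _i : ι, Fintype.card V :=
        sum_le_sum fun i _ => two_mul_card_ne_zero_le ((Pi.evalAddMonoidHom _ i).comp f)
    _ = Fintype.card ι * Fintype.card V := by simp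

end CodingBounds

section Spectrum

variable {N K L d : ℕ} {G : Matrix (Fin N) (Fin N) F2} {I J : Finset (Fin N)}

theorem minDist_le_hammingNorm {u : Fin N → F2} (hu : u ≠ 0) (huI : ∀ i, u i ≠ 0 → i ∈ I) :
    minDist G I ≤ hammingNorm (u ᵥ* G) :=
  Nat.sInf_le ⟨u, hu, huI, rfl⟩

theorem exists_hammingNorm_eq_minDist (hI : I.Nonempty) :
    ∃ u : Fin N → F2, u ≠ 0 ∧ (∀ i, u i ≠ 0 → i ∈ I) ∧ hammingNorm (u ᵥ* G) = minDist G I := by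
  obtain ⟨i, hi⟩ := hI
  refine Nat.sInf_mem (s := {w | ∃ u : Fin N → F2, u ≠ 0 ∧ (∀ i, u i ≠ 0 → i ∈ I) ∧
    hammingNorm (u ᵥ* G) = w}) ⟨_, Pi.single i 1, by simp, fun j hj => ?_, rfl⟩
  rwa [not_imp_comm.mp (Pi.single_eq_of_ne (M := fun _ => F2) · 1) hj]

theorem minDist_empty : minDist G ∅ = 0 := by
  refine Nat.sInf_eq_zero.mpr (.inr (Set.eq_empty_of_forall_notMem ?_))
  rintro _ ⟨u, hu, hu_empty, -⟩
  exact hu (funext fun i => by simpa using hu_empty i)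

theorem le_minDist (hI : I.Nonempty)
    (h : ∀ u : Fin N → F2, u ≠ 0 → (∀ i, u i ≠ 0 → i ∈ I) → d ≤ hammingNorm (u ᵥ* G)) :
    d ≤ minDist G I := by
  obtain ⟨u, hu, huI, hw⟩ := exists_hammingNorm_eq_minDist (G := G) hI
  exact (h u hu huI).trans_eq hw

theorem minDist_anti (hJ : J.Nonempty) (hJI : J ⊆ I) : minDist G I ≤ minDist G J :=
  le_minDist hJ fun _ hu huJ => minDist_le_hammingNorm hu fun i hi => hJI (huJ i hi)

theorem sum_vecMul_apply {m n R : Type*} [Fintype m] [Fintype n] [NonUnitalNonAssocSemiring R]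
    (u : m → R) (A : Matrix m n R) :
    ∑ j, (u ᵥ* A) j = ∑ i, u i * ∑ j, A i j := by
  simp only [vecMul, dotProduct, mul_sum]
  exact sum_comm

theorem even_minDist (hI : ∀ i ∈ I, Even (hammingNorm (G i))) : Even (minDist G I) := by
  obtain rfl | hne := I.eq_empty_or_nonempty
  · simp [minDist_empty]
  obtain ⟨u, -, huI, hw⟩ := exists_hammingNorm_eq_minDist (G := G) hne
  rw [← hw, even_hammingNorm_iff_sum_eq_zero, sum_vecMul_apply]
  refine sum_eq_zero fun i _ => mul_eq_zero.mpr (or_iff_not_imp_left.mpr fun hi => ?_)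
  exact (even_hammingNorm_iff_sum_eq_zero _).mp (hI i (huI i hi))

theorem bddAbove_minDist (G : Matrix (Fin N) (Fin N) F2) (K : ℕ) :
    BddAbove {d | ∃ I : Finset (Fin N), #I = K ∧ minDist G I = d} := by
  refine ((Set.finite_range (minDist G)).subset ?_).bddAbove
  rintro _ ⟨I, -, rfl⟩
  exact ⟨I, rfl⟩

theorem minDist_le_spec (hI : #I = K) : minDist G I ≤ spec G K :=
  le_csSup (bddAbove_minDist G K) ⟨I, hI, rfl⟩

theorem exists_minDist_eq_spec (h : 0 < spec G K) :
    ∃ I : Finset (Fin N), #I = K ∧ minDist G I = spec G K := by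
  refine Nat.sSup_mem (Set.nonempty_iff_ne_empty.mpr fun hempty => h.ne' ?_) (bddAbove_minDist G K)
  exact (congrArg sSup hempty).trans csSup_empty

theorem spec_anti (hK : 0 < K) (hKL : K ≤ L) : spec G L ≤ spec G K := by
  obtain h | h := (spec G L).eq_zero_or_pos
  · simp [h]
  obtain ⟨I, rfl, hI⟩ := exists_minDist_eq_spec h
  obtain ⟨J, hJI, hJ⟩ := exists_subset_card_eq hKL
  rw [← hI]
  exact (minDist_anti (card_pos.mp (hJ ▸ hK)) hJI).trans (minDist_le_spec hJ)

theorem exists_minWeightAtLeast_of_le_spec (hd : 0 < d) (h : d ≤ spec G K) :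
    ∃ f : (Fin K → F2) →+ Fin N → F2, MinWeightAtLeast f d := by
  obtain ⟨I, hIK, hI⟩ := exists_minDist_eq_spec (hd.trans_le h)
  let e := I.orderEmbOfFin hIK
  refine ⟨(G.vecMulLinear ∘ₗ Function.ExtendByZero.linearMap F2 e).toAddMonoidHom, fun v hv => ?_⟩
  have extend_ne_zero : Function.extend e v 0 ≠ 0 := fun h0 => hv <| funext fun k =>
    (e.injective.extend_apply v 0 k).symm.trans (congrFun h0 (e k))
  have support_subset (i : Fin N) (hi : Function.extend e v 0 i ≠ 0) : i ∈ I := by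
    by_contra hiI
    refine hi (Function.extend_apply' v (0 : Fin N → F2) i ?_)
    rintro ⟨k, rfl⟩
    exact hiI (I.orderEmbOfFin_mem hIK k)
  exact (h.trans_eq hI.symm).trans (minDist_le_hammingNorm extend_ne_zero support_subset)

end Spectrum

section Kronecker

variable {m n : ℕ} {A : Matrix (Fin m) (Fin m) F2} {B : Matrix (Fin n) (Fin n) F2}
  {I : Finset (Fin m)} {J : Finset (Fin n)}

/-- The product `I × J` of two sets of row indices, as a set of row indices of `kron A B`. -/
def rowProd (I : Finset (Fin m)) (J : Finset (Fin n)) : Finset (Fin (m * n)) :=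
  (I ×ˢ J).map finProdFinEquiv.toEmbedding

theorem mem_rowProd {i : Fin m} {j : Fin n} :
    finProdFinEquiv (i, j) ∈ rowProd I J ↔ i ∈ I ∧ j ∈ J := by
  simp [rowProd]

theorem card_rowProd : #(rowProd I J) = #I * #J := by
  rw [rowProd, card_map, card_product]

theorem vecMul_kron_apply (u : Fin (m * n) → F2) (a : Fin m) (b : Fin n) :
    (u ᵥ* kron A B) (finProdFinEquiv (a, b)) =
      ((fun j => ((fun i => u (finProdFinEquiv (i, j))) ᵥ* A) a) ᵥ* B) b := by
  have kron_apply (i : Fin m) (j : Fin n) :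
      kron A B (finProdFinEquiv (i, j)) (finProdFinEquiv (a, b)) = A i a * B j b := by
    change A (finProdFinEquiv.symm _).1 (finProdFinEquiv.symm _).1 *
      B (finProdFinEquiv.symm _).2 (finProdFinEquiv.symm _).2 = _
    simp only [Equiv.symm_apply_apply]
  simp only [vecMul, dotProduct, ← finProdFinEquiv.sum_comp, Fintype.sum_prod_type, kron_apply,
    sum_mul, mul_assoc]
  exact sum_comm

theorem minDist_mul_minDist_le_minDist_kron :
    minDist A I * minDist B J ≤ minDist (kron A B) (rowProd I J) := by
  obtain rfl | hI := I.eq_empty_or_nonempty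
  · simp [minDist_empty]
  obtain rfl | hJ := J.eq_empty_or_nonempty
  · simp [minDist_empty]
  refine le_minDist ((hI.product hJ).map) fun u hu huIJ => ?_
  obtain ⟨⟨i₀, j₀⟩, h₀⟩ : ∃ p, u (finProdFinEquiv p) ≠ 0 :=
    (finProdFinEquiv.surjective.exists (p := (u · ≠ 0))).mp (Function.ne_iff.mp hu)
  let column (j : Fin n) : Fin m → F2 := fun i => u (finProdFinEquiv (i, j))
  have column_weight : minDist A I ≤ hammingNorm (column j₀ ᵥ* A) :=
    minDist_le_hammingNorm (Function.ne_iff.mpr ⟨i₀, h₀⟩) fun i hi => (mem_rowProd.mp (huIJ _ hi)).1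
  rw [mul_comm]
  refine (Nat.mul_le_mul_left _ column_weight).trans
    (mul_hammingNorm_le_hammingNorm _ _ fun a ha => ?_)
  simp only [vecMul_kron_apply]
  refine minDist_le_hammingNorm (Function.ne_iff.mpr ⟨j₀, ha⟩) fun j hj => ?_
  obtain ⟨i, hi⟩ : ∃ i, column j i ≠ 0 := by
    by_contra! hcol
    exact hj (by simp [show (fun i => u (finProdFinEquiv (i, j))) = 0 from funext hcol])
  exact (mem_rowProd.mp (huIJ _ hi)).2

theorem minDist_mul_minDist_le_spec_kron :
    minDist A I * minDist B J ≤ spec (kron A B) (#I * #J) :=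
  minDist_mul_minDist_le_minDist_kron.trans (minDist_le_spec card_rowProd)

theorem sum_vecMul_kron_block (u : Fin (m * n) → F2) (a : Fin m) :
    ∑ b, (u ᵥ* kron A B) (finProdFinEquiv (a, b)) =
      ((fun i => ∑ j, u (finProdFinEquiv (i, j)) * ∑ b, B j b) ᵥ* A) a := by
  simp only [vecMul_kron_apply, sum_vecMul_apply]
  simp only [vecMul, dotProduct, sum_mul]
  rw [sum_comm]
  exact sum_congr rfl fun i _ => sum_congr rfl fun j _ => mul_right_comm _ _ _

theorem hammingNorm_vecMul_le_hammingNorm_vecMul_kron (u : Fin (m * n) → F2) :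
    hammingNorm ((fun i => ∑ j, u (finProdFinEquiv (i, j)) * ∑ b, B j b) ᵥ* A) ≤
      hammingNorm (u ᵥ* kron A B) := by
  rw [← one_mul (hammingNorm (_ ᵥ* A))]
  refine mul_hammingNorm_le_hammingNorm _ _ fun a ha => hammingNorm_pos_iff.mpr fun hblock => ha ?_
  rw [← sum_vecMul_kron_block]
  exact sum_eq_zero fun b _ => congrFun hblock b

-- If the word involves the extra row, its block sums form the row `A i₀`.
theorem min_le_minDist_kron_insert {i₀ : Fin m} {j₀ : Fin n}
    (hJ : ∀ j ∈ J, Even (hammingNorm (B j))) (hj₀ : Odd (hammingNorm (B j₀))) :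
    min (minDist A I * minDist B J) (hammingNorm (A i₀)) ≤
      minDist (kron A B) (insert (finProdFinEquiv (i₀, j₀)) (rowProd I J)) := by
  refine le_minDist (insert_nonempty _ _) fun u hu huI => ?_
  by_cases h₀ : u (finProdFinEquiv (i₀, j₀)) = 0
  · refine (min_le_left _ _).trans (minDist_mul_minDist_le_minDist_kron.trans
      (minDist_le_hammingNorm hu fun p hp => (mem_insert.mp (huI p hp)).resolve_left ?_))
    rintro rfl
    exact hp h₀
  have term_eq_zero (i : Fin m) (j : Fin n) (hij : (i, j) ≠ (i₀, j₀)) :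
      u (finProdFinEquiv (i, j)) * ∑ b, B j b = 0 := by
    refine mul_eq_zero.mpr (or_iff_not_imp_left.mpr fun hu_ij => ?_)
    have hmem := (mem_insert.mp (huI _ hu_ij)).resolve_left (finProdFinEquiv.injective.ne hij)
    exact (even_hammingNorm_iff_sum_eq_zero _).mp (hJ j (mem_rowProd.mp hmem).2)
  have term_eq_one : u (finProdFinEquiv (i₀, j₀)) * ∑ b, B j₀ b = 1 := by
    rw [← Nat.not_even_iff_odd, even_hammingNorm_iff_sum_eq_zero] at hj₀
    exact Fin.eq_one_of_ne_zero _ (mul_ne_zero (M₀ := F2) h₀ hj₀)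
  have row_sums : (fun i => ∑ j, u (finProdFinEquiv (i, j)) * ∑ b, B j b) = Pi.single i₀ 1 := by
    ext i
    obtain rfl | hi := eq_or_ne i i₀
    · rw [sum_eq_single_of_mem j₀ (mem_univ _) fun j _ hj => term_eq_zero i j (by simpa using hj),
        term_eq_one, Pi.single_eq_same]
    · rw [sum_eq_zero fun j _ => term_eq_zero i j (by simp [hi]), Pi.single_eq_of_ne hi]
  refine (min_le_right _ _).trans ?_
  have weight_le := hammingNorm_vecMul_le_hammingNorm_vecMul_kron (A := A) (B := B) u
  rwa [row_sums, single_one_vecMul] at weight_le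

end Kronecker

section UpperBounds

theorem two_mul_pow_sub_one_mul_spec_le {N K : ℕ} (G : Matrix (Fin N) (Fin N) F2) :
    2 * ((2 ^ K - 1) * spec G K) ≤ N * 2 ^ K := by
  obtain h | h := (spec G K).eq_zero_or_pos
  · simp [h]
  obtain ⟨f, hf⟩ := exists_minWeightAtLeast_of_le_spec h le_rfl
  simpa using hf.plotkin_bound

variable (G : Matrix (Fin 9) (Fin 9) F2)

theorem spec_one_le_nine : spec G 1 ≤ 9 := by
  have plotkin := two_mul_pow_sub_one_mul_spec_le (K := 1) G
  omega

theorem spec_two_le_six : spec G 2 ≤ 6 := by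
  have plotkin := two_mul_pow_sub_one_mul_spec_le (K := 2) G
  omega

theorem spec_three_le_four : spec G 3 ≤ 4 := by
  by_contra! h
  obtain ⟨f, hf⟩ := exists_minWeightAtLeast_of_le_spec (by norm_num) (Nat.succ_le_of_lt h)
  have plotkin := (hf.parityExtend (by decide)).plotkin_bound
  simp at plotkin

theorem spec_five_le_three : spec G 5 ≤ 3 := by
  by_contra! h
  obtain ⟨f, hf⟩ := exists_minWeightAtLeast_of_le_spec (by norm_num) (Nat.succ_le_of_lt h)
  have hamming := hf.puncture.binary_hamming_bound (e := 1) (by norm_num)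
  simp [sum_range_succ] at hamming

theorem spec_six_le_two : spec G 6 ≤ 2 := by
  by_contra! h
  obtain ⟨f, hf⟩ := exists_minWeightAtLeast_of_le_spec (by norm_num) (Nat.succ_le_of_lt h)
  have hamming := hf.binary_hamming_bound (e := 1) (by norm_num)
  simp [sum_range_succ] at hamming

theorem spec_nine_le_one : spec G 9 ≤ 1 := by
  by_contra! h
  obtain ⟨f, hf⟩ := exists_minWeightAtLeast_of_le_spec (by norm_num) (Nat.succ_le_of_lt h)
  have hamming := hf.puncture.binary_hamming_bound (e := 0) (by norm_num)
  simp at hamming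

end UpperBounds

section LowerBounds

theorem three_le_minDist_T3 : 3 ≤ minDist T3 {0} :=
  le_minDist (singleton_nonempty _) (by decide)

theorem two_le_minDist_T3 : 2 ≤ minDist T3 {1, 2} :=
  le_minDist (insert_nonempty _ _) (by decide)

theorem one_le_minDist_T3 : 1 ≤ minDist T3 univ :=
  le_minDist univ_nonempty (by decide)

theorem nine_le_spec_kron_T3_T3_one : 9 ≤ spec (kron T3 T3) 1 :=
  (Nat.mul_le_mul three_le_minDist_T3 three_le_minDist_T3).trans minDist_mul_minDist_le_spec_kron

theorem six_le_spec_kron_T3_T3_two : 6 ≤ spec (kron T3 T3) 2 :=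
  (Nat.mul_le_mul three_le_minDist_T3 two_le_minDist_T3).trans minDist_mul_minDist_le_spec_kron

theorem four_le_spec_kron_T3_T3_four : 4 ≤ spec (kron T3 T3) 4 :=
  (Nat.mul_le_mul two_le_minDist_T3 two_le_minDist_T3).trans minDist_mul_minDist_le_spec_kron

theorem three_le_spec_kron_T3_T3_five : 3 ≤ spec (kron T3 T3) 5 := by
  calc 3 ≤ min (minDist T3 {1, 2} * minDist T3 {1, 2}) (hammingNorm (T3 0)) :=
        le_min ((Nat.le_succ 3).trans (Nat.mul_le_mul two_le_minDist_T3 two_le_minDist_T3))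
          (by decide)
    _ ≤ minDist (kron T3 T3) (insert (finProdFinEquiv (0, 0)) (rowProd {1, 2} {1, 2})) :=
        min_le_minDist_kron_insert (by decide) (by decide)
    _ ≤ spec (kron T3 T3) 5 := minDist_le_spec (by decide)

theorem one_le_minDist_kron_T3_T3 : 1 ≤ minDist (kron T3 T3) univ := by
  have rowProd_univ : rowProd (univ : Finset (Fin 3)) (univ : Finset (Fin 3)) = univ := by
    simp [rowProd]
  rw [← rowProd_univ]
  exact (Nat.mul_le_mul one_le_minDist_T3 one_le_minDist_T3).trans
    minDist_mul_minDist_le_minDist_kron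

theorem two_le_spec_kron_T3_T3_eight : 2 ≤ spec (kron T3 T3) 8 := by
  have even_dist : Even (minDist (kron T3 T3) {0}ᶜ) := even_minDist (by decide)
  have one_le : 1 ≤ minDist (kron T3 T3) {0}ᶜ :=
    one_le_minDist_kron_T3_T3.trans (minDist_anti ⟨1, by decide⟩ (subset_univ _))
  calc 2 ≤ minDist (kron T3 T3) {0}ᶜ := Nat.le_of_dvd one_le even_dist.two_dvd
    _ ≤ spec (kron T3 T3) 8 := minDist_le_spec (by decide)

end LowerBounds

theorem spectrum_T3_kron_T3 :
    spec (kron T3 T3) 1 = 9 ∧ spec (kron T3 T3) 2 = 6 ∧ spec (kron T3 T3) 3 = 4 ∧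
    spec (kron T3 T3) 4 = 4 ∧ spec (kron T3 T3) 5 = 3 ∧ spec (kron T3 T3) 6 = 2 ∧
    spec (kron T3 T3) 7 = 2 ∧ spec (kron T3 T3) 8 = 2 ∧ spec (kron T3 T3) 9 = 1 := by
  have spec_le_spec {K L : ℕ} (hK : 0 < K) (hKL : K ≤ L) :
      spec (kron T3 T3) L ≤ spec (kron T3 T3) K := spec_anti hK hKL
  have two_le_spec {K : ℕ} (hK : 0 < K) (hK8 : K ≤ 8) : 2 ≤ spec (kron T3 T3) K :=
    two_le_spec_kron_T3_T3_eight.trans (spec_le_spec hK hK8)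
  have spec_le_two {K : ℕ} (hK : 6 ≤ K) : spec (kron T3 T3) K ≤ 2 :=
    (spec_le_spec (by norm_num) hK).trans (spec_six_le_two _)
  exact ⟨(spec_one_le_nine _).antisymm nine_le_spec_kron_T3_T3_one,
    (spec_two_le_six _).antisymm six_le_spec_kron_T3_T3_two,
    (spec_three_le_four _).antisymm
      (four_le_spec_kron_T3_T3_four.trans (spec_le_spec (by norm_num) (by norm_num))),
    ((spec_le_spec (by norm_num) (by norm_num)).trans (spec_three_le_four _)).antisymm
      four_le_spec_kron_T3_T3_four,
    (spec_five_le_three _).antisymm three_le_spec_kron_T3_T3_five,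
    (spec_le_two (by norm_num)).antisymm (two_le_spec (by norm_num) (by norm_num)),
    (spec_le_two (by norm_num)).antisymm (two_le_spec (by norm_num) (by norm_num)),
    (spec_le_two (by norm_num)).antisymm (two_le_spec (by norm_num) (by norm_num)),
    (spec_nine_le_one _).antisymm (one_le_minDist_kron_T3_T3.trans (minDist_le_spec (by rfl)))⟩
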